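/- Let G = (V, E, x) be a finite connected rooted graph with conductances λ ∈ (0,∞)^E, let θ ∈ (1,∞), and let yz ∈ E be an edge. Let G̃ be the graph obtained from G by adding a new vertex t on the edge yz (i.e., replacing yz by the two edges yt and tz), and let λ̃ be the conductances on G̃ defined by: λ̃ = λ on all edges not incident to t, λ̃_{yt} = θ λ_{yz}, and λ̃_{tz} = (θ/(θ−1)) λ_{yz}. Then for every vertex i ∈ V, Var^{IV-GFF}_{G̃,λ̃}[φ(i)] ≤ Var^{IV-GFF}_{G,λ}[φ(i)], and for every pair of vertices i,j ∈ V, Var^{IV-GFF}_{G̃,λ̃}[φ(i) − φ(j)] ≤ Var^{IV-GFF}_{G,λ}[φ(i) − φ(j)]. -/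

import Mathlib

open scoped ENNReal

noncomputable section

/-- The graph on `V` whose edges are the pairs of distinct vertices carrying a positive
conductance. -/
def supportGraph {V : Type*} (c : V → V → ℝ) : SimpleGraph V :=
  SimpleGraph.fromRel (fun a b => 0 < c a b)

/-- Configurations of the integer-valued Gaussian free field on the rooted graph with
conductances `c` and root `x`: integer-valued height functions vanishing at the root and
(by convention) outside the connected component of the root. -/
def GffConfig {V : Type*} (c : V → V → ℝ) (x : V) : Type _ :=
  {φ : V → ℤ // φ x = 0 ∧ ∀ v : V, ¬ (supportGraph c).Reachable x v → φ v = 0}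

/-- Boltzmann weight `exp(−∑_{ij∈E} λ_{ij}(φ(i)−φ(j))²)` of a configuration (each
unordered pair is counted once, whence the factor `1/2` in the ordered sum). -/
def gffWeight {V : Type*} [Fintype V] (c : V → V → ℝ) (φ : V → ℤ) : ℝ :=
  Real.exp (-((1 : ℝ) / 2 * ∑ i : V, ∑ j : V, c i j * ((φ i - φ j : ℤ) : ℝ) ^ 2))

/-- Partition function of the integer-valued Gaussian free field. -/
def gffZ {V : Type*} [Fintype V] (c : V → V → ℝ) (x : V) : ℝ :=
  ∑' φ : GffConfig c x, gffWeight c φ.val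

/-- Variance of an observable `f` under the integer-valued Gaussian free field
(real-valued formula, meaningful on the connected component of the root). -/
def gffRVar {V : Type*} [Fintype V] (c : V → V → ℝ) (x : V) (f : (V → ℤ) → ℝ) : ℝ :=
  (∑' φ : GffConfig c x, f φ.val ^ 2 * gffWeight c φ.val) / gffZ c x
    - ((∑' φ : GffConfig c x, f φ.val * gffWeight c φ.val) / gffZ c x) ^ 2

open scoped Classical in
/-- Variance of the height `φ(i)` under the integer-valued Gaussian free field, set to
`∞` when `i` is not connected to the root. -/
def gffVar1 {V : Type*} [Fintype V] (c : V → V → ℝ) (x : V) (i : V) : ℝ≥0∞ :=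
  if (supportGraph c).Reachable x i then
    ENNReal.ofReal (gffRVar c x fun φ => ((φ i : ℤ) : ℝ))
  else ⊤

open scoped Classical in
/-- Variance of the height difference `φ(i) − φ(j)` under the integer-valued Gaussian
free field, set to `∞` when `i` or `j` is not connected to the root. -/
def gffVar2 {V : Type*} [Fintype V] (c : V → V → ℝ) (x : V) (i j : V) : ℝ≥0∞ :=
  if (supportGraph c).Reachable x i ∧ (supportGraph c).Reachable x j then
    ENNReal.ofReal (gffRVar c x fun φ => ((φ i : ℤ) : ℝ) - ((φ j : ℤ) : ℝ))
  else ⊤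

end

/-- The conductances on the graph obtained from `(V, c)` by adding a new vertex `t`
(represented by `none : Option V`) in the middle of the edge `yz`: the edge `yz` is
replaced by the edges `yt` and `tz`, with conductances `θ·λ_{yz}` and
`(θ/(θ−1))·λ_{yz}` respectively. -/
noncomputable def addVertexCond {V : Type*} [DecidableEq V]
    (c : V → V → ℝ) (y z : V) (θ : ℝ) : Option V → Option V → ℝ
  | some a, some b => if (a = y ∧ b = z) ∨ (a = z ∧ b = y) then 0 else c a b
  | some a, none => if a = y then θ * c y z else if a = z then θ / (θ - 1) * c y z else 0
  | none, some b => if b = y then θ * c y z else if b = z then θ / (θ - 1) * c y z else 0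
  | none, none => 0

/-!
Fix the heights on `V`. As a function of the new height `t`, the energy gains the single term
`κ (t - U φ)²`, where `U` interpolates linearly between the heights at `y` and `z` and
`κ = λ_{yz} θ² / (θ - 1)`. Summing over `t ∈ ℤ` multiplies the weight of `φ` by a periodized
Gaussian of `U φ`, which by Poisson summation is a combination with nonnegative coefficients of the
functions `cos (2πk U φ)`. It therefore suffices that, under a weight `exp (-Q)` with `Q` quadratic
on a torsion-free abelian group `A`, the functions `cos U` and `W²` are negatively correlated
whenever `U` and `W` are additive. By the parallelogram law, the substitution
`(a, b) ↦ (a + b, a - b)` turns their covariance into `-∑ F (a + b) F (a - b)`, up to a positive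
factor, where `F = W exp (-Q / 2) sin (U / 2)`. The pairs `(a + b, a - b)` are exactly the pairs
lying in a common coset of `2A`, so this sum is the sum over the cosets of the squares of the coset
sums of `F`.
-/

section LatticeGaussian

open Real

section Sums

variable {α β : Type*}

theorem summable_mul_of_abs_le {f g : α → ℝ} {B : ℝ} (hf : Summable f) (hg : ∀ a, |g a| ≤ B) :
    Summable fun a => f a * g a :=
  (hf.norm.mul_right B).of_norm_bounded fun a => by
    rw [norm_mul]
    exact mul_le_mul_of_nonneg_left (hg a) (norm_nonneg _)

theorem hasSum_mul_prod {f : α → ℝ} {g : β → ℝ} (hf : Summable f) (hg : Summable g) :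
    HasSum (fun p : α × β => f p.1 * g p.2) ((∑' a, f a) * ∑' b, g b) :=
  hf.hasSum.mul hg.hasSum (summable_mul_of_summable_norm hf.norm hg.norm)

theorem hasSum_prod_weight_mul_sub_mul_sub {w f g : α → ℝ} (hw : Summable w)
    (hf : Summable fun a => w a * f a) (hg : Summable fun a => w a * g a)
    (hfg : Summable fun a => w a * (f a * g a)) :
    HasSum (fun p : α × α => w p.1 * w p.2 * ((f p.1 - f p.2) * (g p.1 - g p.2)))
      (2 * ((∑' a, w a * (f a * g a)) * (∑' a, w a)
        - (∑' a, w a * f a) * ∑' a, w a * g a)) := by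
  convert! ((hasSum_mul_prod hfg hw).add (hasSum_mul_prod hw hfg)).sub
    ((hasSum_mul_prod hf hg).add (hasSum_mul_prod hg hf)) using 1
  · funext p
    ring
  · ring

theorem tsum_ite_fiber_mul_nonneg [DecidableEq β] (q : α → β) {F : α → ℝ} (hF : Summable F) :
    0 ≤ ∑' p : α × α, if q p.1 = q p.2 then F p.1 * F p.2 else 0 := by
  have hsum : Summable fun p : α × α => if q p.1 = q p.2 then F p.1 * F p.2 else 0 :=
    (hasSum_mul_prod hF hF).summable.norm.of_norm_bounded fun p => by
      split_ifs
      · rfl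
      · simpa using norm_nonneg (F p.1 * F p.2)
  have hrow (a : α) : (∑' b, if q a = q b then F a * F b else 0)
      = F a * ∑' b : q ⁻¹' {q a}, F b := by
    rw [← tsum_mul_left, tsum_subtype (q ⁻¹' {q a}) fun b => F a * F b]
    refine tsum_congr fun b => ?_
    by_cases hb : q a = q b
    · rw [if_pos hb, Set.indicator_of_mem (show b ∈ q ⁻¹' {q a} from hb.symm)]
    · rw [if_neg hb, Set.indicator_of_notMem (show b ∉ q ⁻¹' {q a} from Ne.symm hb)]
  have hfiber := (hsum.hasSum.prod_fiberwise fun a => (hsum.prod_factor a).hasSum).tsum_fiberwise q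
  rw [← hfiber.tsum_eq]
  refine tsum_nonneg fun k => ?_
  have hcell (a : q ⁻¹' {k}) : (∑' b, if q a = q b then F a * F b else 0)
      = F a * ∑' b : q ⁻¹' {k}, F b := by
    rw [hrow a, show q a = k from a.2]
  simp only [hcell, tsum_mul_right]
  exact mul_self_nonneg _

theorem hasSum_mul_tsum_of_hasSum_mul {b : β → ℝ} {C : β → α → ℝ} {u Θ : α → ℝ}
    (hb : Summable b) (hC : ∀ k a, |C k a| ≤ 1)
    (hΘ : ∀ a, HasSum (fun k => b k * C k a) (Θ a)) (hu : Summable u) :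
    HasSum (fun k => b k * ∑' a, u a * C k a) (∑' a, u a * Θ a) := by
  have hjoint : Summable fun p : α × β => u p.1 * (b p.2 * C p.2 p.1) := by
    refine (hasSum_mul_prod hu hb).summable.norm.of_norm_bounded fun p => ?_
    rw [← mul_assoc, norm_mul]
    exact mul_le_of_le_one_right (norm_nonneg _) (hC _ _)
  have hrows : HasSum (fun a => u a * Θ a) (∑' p : α × β, u p.1 * (b p.2 * C p.2 p.1)) :=
    hjoint.hasSum.prod_fiberwise fun a => (hΘ a).mul_left (u a)
  have hcol (k : β) : HasSum (fun a => u a * (b k * C k a)) (b k * ∑' a, u a * C k a) := by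
    simpa only [mul_left_comm] using (summable_mul_of_abs_le hu (hC k)).hasSum.mul_left (b k)
  rw [hrows.tsum_eq]
  exact ((Equiv.prodComm β α).hasSum_iff.mpr hjoint.hasSum).prod_fiberwise hcol

theorem hasSum_prod_mul_of_hasSum {w Θ : α → ℝ} {k : α → β → ℝ} (hw : ∀ a, 0 ≤ w a)
    (hk : ∀ a b, 0 ≤ k a b) (hΘ : ∀ a, HasSum (k a) (Θ a)) (hwΘ : Summable fun a => w a * Θ a) :
    HasSum (fun p : α × β => w p.1 * k p.1 p.2) (∑' a, w a * Θ a) := by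
  have hrow (a : α) : HasSum (fun b => w a * k a b) (w a * Θ a) := (hΘ a).mul_left (w a)
  have hjoint : Summable fun p : α × β => w p.1 * k p.1 p.2 := by
    refine (summable_prod_of_nonneg fun p => mul_nonneg (hw _) (hk _ _)).mpr
      ⟨fun a => (hrow a).summable, hwΘ.congr fun a => ?_⟩
    exact (hrow a).tsum_eq.symm
  rw [(hjoint.hasSum.prod_fiberwise hrow).tsum_eq]
  exact hjoint.hasSum

end Sums

theorem summable_exp_neg_mul_sq {α : Type*} {Q W : α → ℝ}
    (hW : Summable fun a => W a * exp (-(Q a / 2))) : Summable fun a => exp (-Q a) * W a ^ 2 := by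
  have hdiag : Function.Injective fun a : α => (a, a) := fun _ _ h => (Prod.mk.inj h).1
  refine ((hasSum_mul_prod hW hW).summable.comp_injective hdiag).congr fun a => ?_
  rw [Function.comp_apply, mul_mul_mul_comm, ← exp_add, mul_comm, sq]
  ring_nf

theorem summable_mul_exp_neg_half {α : Type*} {Q W : α → ℝ} {D : ℝ} (hQ : ∀ a, 0 ≤ Q a)
    (hD : 0 ≤ D) (hWQ : ∀ a, W a ^ 2 ≤ D * Q a) (hexp : Summable fun a => exp (-(Q a / 4))) :
    Summable fun a => W a * exp (-(Q a / 2)) := by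
  refine (hexp.mul_left (1 + 4 * D)).of_norm_bounded fun a => ?_
  have hgrowth : |W a| ≤ (1 + 4 * D) * exp (Q a / 4) := calc
    |W a| ≤ 1 + W a ^ 2 := by nlinarith [sq_nonneg (|W a| - 1), sq_abs (W a)]
    _ ≤ 1 + 4 * D * (Q a / 4) := by linarith [hWQ a]
    _ ≤ exp (Q a / 4) + 4 * D * exp (Q a / 4) := by
        gcongr
        · exact one_le_exp (div_nonneg (hQ a) zero_le_four)
        · linarith [add_one_le_exp (Q a / 4)]
    _ = (1 + 4 * D) * exp (Q a / 4) := by ring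
  calc ‖W a * exp (-(Q a / 2))‖ = |W a| * exp (-(Q a / 2)) := by
        rw [norm_mul, norm_eq_abs, norm_eq_abs, abs_exp]
    _ ≤ (1 + 4 * D) * exp (Q a / 4) * exp (-(Q a / 2)) := by gcongr
    _ = (1 + 4 * D) * exp (-(Q a / 4)) := by
        rw [mul_assoc, ← exp_add]
        ring_nf

section TorsionFree

variable {A : Type*} [AddCommGroup A]

theorem add_sub_injective [IsAddTorsionFree A] :
    Function.Injective fun p : A × A => (p.1 + p.2, p.1 - p.2) := by
  rintro ⟨a, b⟩ ⟨a', b'⟩ h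
  obtain ⟨hadd, hsub⟩ : a + b = a' + b' ∧ a - b = a' - b' := Prod.mk.inj h
  have htwo (c d : A) : 2 • c = (c + d) + (c - d) := by abel
  obtain rfl : a = a' := nsmul_right_injective two_ne_zero <| by
    simp only [htwo a b, htwo a' b', hadd, hsub]
  rw [add_left_cancel hadd]

theorem range_add_sub :
    Set.range (fun p : A × A => (p.1 + p.2, p.1 - p.2)) =
      {p | (p.1 : A ⧸ (nsmulAddMonoidHom (α := A) 2).range) = p.2} := by
  ext ⟨u, v⟩
  simp only [Set.mem_range, Prod.mk.injEq, Prod.exists, Set.mem_ofPred_eq, QuotientAddGroup.eq,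
    AddMonoidHom.mem_range, nsmulAddMonoidHom_apply]
  constructor
  · rintro ⟨a, b, rfl, rfl⟩
    exact ⟨-b, by abel⟩
  · rintro ⟨d, hd⟩
    obtain rfl : v = u + 2 • d := by rw [hd]; abel
    exact ⟨u + d, -d, by abel, by abel⟩

theorem sin_half_mul_exp_half_add_mul_sub {Q : A → ℝ}
    (hQ : ∀ a b, Q (a + b) + Q (a - b) = 2 * Q a + 2 * Q b) (W U : A →+ ℝ) (a b : A) :
    W (a + b) * exp (-(Q (a + b) / 2)) * sin (U (a + b) / 2) *
        (W (a - b) * exp (-(Q (a - b) / 2)) * sin (U (a - b) / 2)) =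
      -(1 / 2) * (exp (-Q a) * exp (-Q b) * ((W a ^ 2 - W b ^ 2) * (cos (U a) - cos (U b)))) := by
  have hexp : exp (-(Q (a + b) / 2)) * exp (-(Q (a - b) / 2)) = exp (-Q a) * exp (-Q b) := by
    rw [← exp_add, ← exp_add]
    congr 1
    linarith [hQ a b]
  rw [cos_sub_cos, ← hexp]
  simp only [map_add, map_sub]
  ring

variable [IsAddTorsionFree A]

theorem tsum_add_mul_sub_nonneg {F : A → ℝ} (hF : Summable F) :
    0 ≤ ∑' p : A × A, F (p.1 + p.2) * F (p.1 - p.2) := by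
  classical
  let q : A → A ⧸ (nsmulAddMonoidHom (α := A) 2).range := QuotientAddGroup.mk
  have hrange (p : A × A) : q (p.1 + p.2) = q (p.1 - p.2) := by
    have := Set.mem_range_self (f := fun p : A × A => (p.1 + p.2, p.1 - p.2)) p
    rwa [range_add_sub] at this
  have hsupp : Function.support (fun p : A × A => if q p.1 = q p.2 then F p.1 * F p.2 else 0) ⊆
      Set.range fun p : A × A => (p.1 + p.2, p.1 - p.2) := by
    rw [range_add_sub]
    intro p hp
    by_contra hne
    exact hp (if_neg hne)
  calc 0 ≤ ∑' p : A × A, if q p.1 = q p.2 then F p.1 * F p.2 else 0 :=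
        tsum_ite_fiber_mul_nonneg q hF
    _ = ∑' p : A × A, if q (p.1 + p.2) = q (p.1 - p.2) then F (p.1 + p.2) * F (p.1 - p.2) else 0 :=
        (add_sub_injective.tsum_eq hsupp).symm
    _ = ∑' p : A × A, F (p.1 + p.2) * F (p.1 - p.2) :=
        tsum_congr fun p => if_pos (hrange p)

theorem tsum_sq_mul_cos_mul_tsum_le {Q : A → ℝ}
    (hQ : ∀ a b, Q (a + b) + Q (a - b) = 2 * Q a + 2 * Q b) (W U : A →+ ℝ)
    (hexp : Summable fun a => exp (-Q a)) (hW : Summable fun a => W a * exp (-(Q a / 2))) :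
    (∑' a, exp (-Q a) * W a ^ 2 * cos (U a)) * (∑' a, exp (-Q a)) ≤
      (∑' a, exp (-Q a) * W a ^ 2) * ∑' a, exp (-Q a) * cos (U a) := by
  have hF : Summable fun a => W a * exp (-(Q a / 2)) * sin (U a / 2) :=
    summable_mul_of_abs_le hW fun a => abs_sin_le_one _
  have hW2 : Summable fun a => exp (-Q a) * W a ^ 2 := summable_exp_neg_mul_sq hW
  have hcov := hasSum_prod_weight_mul_sub_mul_sub hexp hW2
    (summable_mul_of_abs_le hexp fun a => abs_cos_le_one (U a))
    (by simpa only [mul_assoc] using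
      summable_mul_of_abs_le hW2 fun a => abs_cos_le_one (U a))
  have hpos := tsum_add_mul_sub_nonneg hF
  simp only [sin_half_mul_exp_half_add_mul_sub hQ, tsum_mul_left, hcov.tsum_eq] at hpos
  simp only [mul_assoc]
  linarith

theorem tsum_sq_mul_tsum_le_of_hasSum_cos {Q : A → ℝ}
    (hQ : ∀ a b, Q (a + b) + Q (a - b) = 2 * Q a + 2 * Q b) (W : A →+ ℝ)
    (hexp : Summable fun a => exp (-Q a)) (hW : Summable fun a => W a * exp (-(Q a / 2)))
    {K : Type*} {b : K → ℝ} (hb : ∀ k, 0 ≤ b k) (hbs : Summable b) (U : K → A →+ ℝ) {Θ : A → ℝ}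
    (hΘ : ∀ a, HasSum (fun k => b k * cos (U k a)) (Θ a)) :
    (∑' a, exp (-Q a) * W a ^ 2 * Θ a) * (∑' a, exp (-Q a)) ≤
      (∑' a, exp (-Q a) * W a ^ 2) * ∑' a, exp (-Q a) * Θ a := by
  have hmix {u : A → ℝ} (hu : Summable u) :=
    hasSum_mul_tsum_of_hasSum_mul hbs (fun k a => abs_cos_le_one (U k a)) hΘ hu
  refine hasSum_le (fun k => ?_) ((hmix (summable_exp_neg_mul_sq hW)).mul_right _)
    ((hmix hexp).mul_left _)
  calc b k * (∑' a, exp (-Q a) * W a ^ 2 * cos (U k a)) * (∑' a, exp (-Q a))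
      = b k * ((∑' a, exp (-Q a) * W a ^ 2 * cos (U k a)) * (∑' a, exp (-Q a))) := mul_assoc ..
    _ ≤ b k * ((∑' a, exp (-Q a) * W a ^ 2) * ∑' a, exp (-Q a) * cos (U k a)) :=
        mul_le_mul_of_nonneg_left (tsum_sq_mul_cos_mul_tsum_le hQ W (U k) hexp hW) (hb k)
    _ = (∑' a, exp (-Q a) * W a ^ 2) * (b k * ∑' a, exp (-Q a) * cos (U k a)) :=
        mul_left_comm ..

end TorsionFree

theorem hasSum_exp_neg_mul_int_sub_sq {κ : ℝ} (hκ : 0 < κ) (u : ℝ) :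
    HasSum (fun t : ℤ => exp (-(κ * (t - u) ^ 2))) (HurwitzZeta.evenKernel u (κ / π)) := by
  have h := HurwitzZeta.hasSum_int_evenKernel (-u) (div_pos hκ pi_pos)
  rw [AddCircle.coe_neg, HurwitzZeta.evenKernel_neg] at h
  refine h.congr_fun fun t => ?_
  congr 1
  field_simp
  ring

theorem summable_exp_neg_mul_int_sq {κ : ℝ} (hκ : 0 < κ) :
    Summable fun t : ℤ => exp (-(κ * (t : ℝ) ^ 2)) := by
  simpa using (hasSum_exp_neg_mul_int_sub_sq hκ 0).summable

theorem summable_exp_neg_mul_sum_int_sq {ι : Type*} [Fintype ι] {κ : ℝ} (hκ : 0 < κ) :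
    Summable fun φ : ι → ℤ => exp (-(κ * ∑ i, (φ i : ℝ) ^ 2)) := by
  classical
  set g : ℤ → ℝ := fun k => exp (-(κ * (k : ℝ) ^ 2))
  have hg (k : ℤ) : 0 ≤ g k := (exp_pos _).le
  have hprod (φ : ι → ℤ) : exp (-(κ * ∑ i, (φ i : ℝ) ^ 2)) = ∏ i, g (φ i) := by
    rw [← exp_sum, Finset.mul_sum, Finset.sum_neg_distrib]
  simp only [hprod]
  refine summable_of_sum_le (c := ∏ _i : ι, ∑' k, g k)
    (fun φ => Finset.prod_nonneg fun i _ => hg _) fun s => ?_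
  have hbox : s ⊆ Fintype.piFinset fun i => s.image fun φ => φ i := fun φ hφ =>
    Fintype.mem_piFinset.mpr fun i => Finset.mem_image_of_mem _ hφ
  calc ∑ φ ∈ s, ∏ i, g (φ i)
      ≤ ∑ φ ∈ Fintype.piFinset fun i => s.image fun φ => φ i, ∏ i, g (φ i) :=
        Finset.sum_le_sum_of_subset_of_nonneg hbox fun _ _ _ => Finset.prod_nonneg fun i _ => hg _
    _ = ∏ i, ∑ k ∈ s.image fun φ => φ i, g k := (Finset.prod_univ_sum _ fun _ => g).symm
    _ ≤ ∏ _i : ι, ∑' k, g k :=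
        Finset.prod_le_prod (fun _ _ => Finset.sum_nonneg fun k _ => hg k) fun _ _ =>
          (summable_exp_neg_mul_int_sq hκ).sum_le_tsum _ fun k _ => hg k

theorem hasSum_cos_evenKernel {τ : ℝ} (hτ : 0 < τ) (u : ℝ) :
    HasSum (fun k : ℤ => 1 / τ ^ (1 / 2 : ℝ) * exp (-(π / τ * (k : ℝ) ^ 2)) * cos (2 * π * k * u))
      (HurwitzZeta.evenKernel u τ) := by
  rw [HurwitzZeta.evenKernel_functional_equation]
  have h := (Complex.hasSum_re (HurwitzZeta.hasSum_int_cosKernel u (one_div_pos.mpr hτ))).mul_left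
    (1 / τ ^ (1 / 2 : ℝ))
  refine h.congr_fun fun k => ?_
  have hphase : 2 * π * Complex.I * u * k = ((2 * π * k * u : ℝ) : ℂ) * Complex.I := by
    push_cast
    ring
  rw [hphase, Complex.re_mul_ofReal, Complex.exp_ofReal_mul_I_re]
  ring_nf

theorem abs_evenKernel_le {τ : ℝ} (hτ : 0 < τ) (u : ℝ) :
    |HurwitzZeta.evenKernel u τ| ≤ HurwitzZeta.evenKernel (0 : ℝ) τ := by
  rw [abs_of_nonneg ((HurwitzZeta.hasSum_int_evenKernel u hτ).nonneg fun t => (exp_pos _).le)]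
  refine hasSum_le (fun k => ?_) (hasSum_cos_evenKernel hτ u) (hasSum_cos_evenKernel hτ 0)
  rw [mul_zero, cos_zero]
  exact mul_le_mul_of_nonneg_left (cos_le_one _) (by positivity)

theorem tsum_sq_mul_evenKernel_mul_tsum_le {A : Type*} [AddCommGroup A] [IsAddTorsionFree A]
    {Q : A → ℝ} (hQ : ∀ a b, Q (a + b) + Q (a - b) = 2 * Q a + 2 * Q b) (W U : A →+ ℝ)
    (hexp : Summable fun a => exp (-Q a)) (hW : Summable fun a => W a * exp (-(Q a / 2)))
    {τ : ℝ} (hτ : 0 < τ) :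
    (∑' a, exp (-Q a) * W a ^ 2 * HurwitzZeta.evenKernel (U a) τ) * (∑' a, exp (-Q a)) ≤
      (∑' a, exp (-Q a) * W a ^ 2) * ∑' a, exp (-Q a) * HurwitzZeta.evenKernel (U a) τ :=
  tsum_sq_mul_tsum_le_of_hasSum_cos hQ W hexp hW (fun k => by positivity)
    ((summable_exp_neg_mul_int_sq (div_pos pi_pos hτ)).mul_left _)
    (fun k : ℤ => (AddMonoidHom.mulLeft (2 * π * k)).comp U)
    fun a => hasSum_cos_evenKernel hτ (U a)

/-- The second moment of the observable `W` under the discrete Gaussian measure, the probability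
measure on `A` with weights proportional to `exp (-Q a)`. -/
noncomputable def gaussianSecondMoment {A : Type*} (Q W : A → ℝ) : ℝ :=
  (∑' a, exp (-Q a) * W a ^ 2) / ∑' a, exp (-Q a)

theorem gaussianSecondMoment_comp_equiv {A B : Type*} (e : A ≃ B) (Q W : B → ℝ) :
    gaussianSecondMoment (fun a => Q (e a)) (fun a => W (e a)) = gaussianSecondMoment Q W := by
  unfold gaussianSecondMoment
  rw [← e.tsum_eq fun b => exp (-Q b) * W b ^ 2, ← e.tsum_eq fun b => exp (-Q b)]

variable {A : Type*} [AddCommGroup A] {Q : A → ℝ}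

theorem tsum_mul_exp_neg_eq_zero (hQ : ∀ a b, Q (a + b) + Q (a - b) = 2 * Q a + 2 * Q b)
    (W : A →+ ℝ) : ∑' a, W a * exp (-Q a) = 0 := by
  have hzero : Q 0 = 0 := by
    have := hQ 0 0
    rw [add_zero, sub_zero] at this
    linarith
  have heven (a : A) : Q (-a) = Q a := by
    have := hQ 0 a
    rw [zero_add, zero_sub] at this
    linarith
  have hodd := (Equiv.neg A).tsum_eq fun a => W a * exp (-Q a)
  simp only [Equiv.neg_apply, map_neg, heven, neg_mul, tsum_neg] at hodd
  linarith

theorem gaussianSecondMoment_prod_int_le [IsAddTorsionFree A]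
    (hQ : ∀ a b, Q (a + b) + Q (a - b) = 2 * Q a + 2 * Q b) (W U : A →+ ℝ)
    (hexp : Summable fun a => exp (-Q a)) (hW : Summable fun a => W a * exp (-(Q a / 2)))
    {κ : ℝ} (hκ : 0 < κ) :
    gaussianSecondMoment (fun p : A × ℤ => Q p.1 + κ * (p.2 - U p.1) ^ 2) (fun p => W p.1) ≤
      gaussianSecondMoment Q W := by
  have hτ : 0 < κ / π := div_pos hκ pi_pos
  have hfiber (a : A) := hasSum_exp_neg_mul_int_sub_sq hκ (U a)
  have hbound (a : A) := abs_evenKernel_le hτ (U a)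
  have hden := hasSum_prod_mul_of_hasSum (fun a => (exp_pos (-Q a)).le)
    (fun a t => (exp_pos _).le) hfiber (summable_mul_of_abs_le hexp hbound)
  have hnum := hasSum_prod_mul_of_hasSum (fun a => mul_nonneg (exp_pos (-Q a)).le (sq_nonneg (W a)))
    (fun a t => (exp_pos _).le) hfiber
    (summable_mul_of_abs_le (summable_exp_neg_mul_sq hW) hbound)
  have hdenpos : 0 < ∑' a, exp (-Q a) * HurwitzZeta.evenKernel (U a) (κ / π) := by
    rw [← hden.tsum_eq]
    exact hden.summable.tsum_pos (fun p => by positivity) 0 (by positivity)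
  unfold gaussianSecondMoment
  simp only [neg_add, exp_add, mul_right_comm _ _ (W _ ^ 2), hden.tsum_eq, hnum.tsum_eq]
  rw [div_le_div_iff₀ hdenpos (hexp.tsum_pos (fun a => (exp_pos _).le) 0 (exp_pos _))]
  exact tsum_sq_mul_evenKernel_mul_tsum_le hQ W U hexp hW hτ

end LatticeGaussian

section Energy

variable {V : Type*} [Fintype V] {c : V → V → ℝ}

/-- The Dirichlet energy of a height function, each unordered pair of vertices being counted once;
`gffWeight c φ` is `exp (-gffEnergy c φ)`. -/
noncomputable def gffEnergy (c : V → V → ℝ) (φ : V → ℤ) : ℝ :=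
  1 / 2 * ∑ i, ∑ j, c i j * ((φ i - φ j : ℤ) : ℝ) ^ 2

theorem gffEnergy_add_add_gffEnergy_sub (c : V → V → ℝ) (φ ψ : V → ℤ) :
    gffEnergy c (φ + ψ) + gffEnergy c (φ - ψ) = 2 * gffEnergy c φ + 2 * gffEnergy c ψ := by
  simp only [gffEnergy, Finset.mul_sum, ← Finset.sum_add_distrib]
  refine Finset.sum_congr rfl fun i _ => Finset.sum_congr rfl fun j _ => ?_
  simp only [Pi.add_apply, Pi.sub_apply]
  push_cast
  ring

theorem mul_sq_sub_le_two_mul_gffEnergy (hnn : ∀ i j, 0 ≤ c i j) (φ : V → ℤ) (a b : V) :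
    c a b * ((φ a : ℝ) - φ b) ^ 2 ≤ 2 * gffEnergy c φ := by
  have hterm (i j : V) : 0 ≤ c i j * ((φ i - φ j : ℤ) : ℝ) ^ 2 :=
    mul_nonneg (hnn i j) (sq_nonneg _)
  calc c a b * ((φ a : ℝ) - φ b) ^ 2 = c a b * ((φ a - φ b : ℤ) : ℝ) ^ 2 := by push_cast; rfl
    _ ≤ ∑ j, c a j * ((φ a - φ j : ℤ) : ℝ) ^ 2 :=
        Finset.single_le_sum (fun j _ => hterm a j) (Finset.mem_univ b)
    _ ≤ ∑ i, ∑ j, c i j * ((φ i - φ j : ℤ) : ℝ) ^ 2 :=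
        Finset.single_le_sum (f := fun i => ∑ j, c i j * ((φ i - φ j : ℤ) : ℝ) ^ 2)
          (fun i _ => Finset.sum_nonneg fun j _ => hterm i j) (Finset.mem_univ a)
    _ = 2 * gffEnergy c φ := by unfold gffEnergy; ring

theorem gffEnergy_nonneg (hnn : ∀ i j, 0 ≤ c i j) (φ : V → ℤ) : 0 ≤ gffEnergy c φ :=
  mul_nonneg one_half_pos.le <| Finset.sum_nonneg fun i _ => Finset.sum_nonneg fun j _ =>
    mul_nonneg (hnn i j) (sq_nonneg _)

theorem exists_sq_sub_le_mul_gffEnergy_of_adj (hnn : ∀ i j, 0 ≤ c i j) {a b : V}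
    (hab : (supportGraph c).Adj a b) :
    ∃ C : ℝ, 0 ≤ C ∧ ∀ φ : V → ℤ, ((φ a : ℝ) - φ b) ^ 2 ≤ C * gffEnergy c φ := by
  have hpos {i j : V} (hij : 0 < c i j) (φ : V → ℤ) :
      ((φ i : ℝ) - φ j) ^ 2 ≤ 2 / c i j * gffEnergy c φ := by
    rw [div_mul_eq_mul_div, le_div_iff₀' hij]
    exact mul_sq_sub_le_two_mul_gffEnergy hnn φ i j
  rcases ((SimpleGraph.fromRel_adj _ a b).mp hab).2 with h | h
  · exact ⟨2 / c a b, by positivity, hpos h⟩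
  · refine ⟨2 / c b a, by positivity, fun φ => ?_⟩
    rw [sub_sq_comm]
    exact hpos h φ

theorem exists_sq_apply_le_mul_gffEnergy (hnn : ∀ i j, 0 ≤ c i j) {x v : V}
    (hv : (supportGraph c).Reachable x v) :
    ∃ C : ℝ, 0 ≤ C ∧ ∀ φ : V → ℤ, φ x = 0 → (φ v : ℝ) ^ 2 ≤ C * gffEnergy c φ := by
  rw [SimpleGraph.reachable_iff_reflTransGen] at hv
  induction hv with
  | refl => exact ⟨0, le_rfl, fun φ hφ => by simp [hφ]⟩
  | @tail a b _ hab ih =>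
    obtain ⟨C, hC, hCφ⟩ := ih
    obtain ⟨D, hD, hDφ⟩ := exists_sq_sub_le_mul_gffEnergy_of_adj hnn hab
    refine ⟨2 * C + 2 * D, by positivity, fun φ hφ => ?_⟩
    calc (φ b : ℝ) ^ 2 ≤ 2 * (φ a : ℝ) ^ 2 + 2 * ((φ a : ℝ) - φ b) ^ 2 := by
          nlinarith [sq_nonneg (2 * (φ a : ℝ) - φ b)]
      _ ≤ (2 * C + 2 * D) * gffEnergy c φ := by linarith [hCφ φ hφ, hDφ φ]

end Energy

theorem exists_sq_map_le_mul_sum_sq {ι : Type*} [Fintype ι] (W : (ι → ℤ) →+ ℝ) :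
    ∃ D : ℝ, 0 ≤ D ∧ ∀ φ : ι → ℤ, W φ ^ 2 ≤ D * ∑ i, (φ i : ℝ) ^ 2 := by
  classical
  refine ⟨∑ i, W (Pi.single i 1) ^ 2, Finset.sum_nonneg fun i _ => sq_nonneg _, fun φ => ?_⟩
  have hcoord : W φ = ∑ i, W (Pi.single i 1) * φ i := by
    conv_lhs => rw [← Finset.univ_sum_single φ, map_sum]
    refine Finset.sum_congr rfl fun i _ => ?_
    rw [mul_comm, ← zsmul_eq_mul, ← map_zsmul, ← Pi.single_smul, smul_eq_mul, mul_one]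
  rw [hcoord]
  exact Finset.sum_mul_sq_le_sq_mul_sq _ _ _

section Configurations

/-- The configurations of `GffConfig c x` as a subgroup of the height functions. -/
def gffConfigSubgroup {V : Type*} (c : V → V → ℝ) (x : V) : AddSubgroup (V → ℤ) where
  carrier := {φ | φ x = 0 ∧ ∀ v, ¬ (supportGraph c).Reachable x v → φ v = 0}
  zero_mem' := ⟨rfl, fun _ _ => rfl⟩
  add_mem' {φ ψ} hφ hψ := ⟨by simp [hφ.1, hψ.1], fun v hv => by simp [hφ.2 v hv, hψ.2 v hv]⟩
  neg_mem' {φ} hφ := ⟨by simp [hφ.1], fun v hv => by simp [hφ.2 v hv]⟩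

variable {V : Type*} [Fintype V] {c : V → V → ℝ}

theorem gffRVar_eq_gaussianSecondMoment (c : V → V → ℝ) (x : V) (W : (V → ℤ) →+ ℝ) :
    gffRVar c x W =
      gaussianSecondMoment (fun φ : gffConfigSubgroup c x => gffEnergy c φ) (fun φ => W φ) := by
  have hmean : ∑' φ : GffConfig c x, W φ.val * gffWeight c φ.val = 0 :=
    tsum_mul_exp_neg_eq_zero
      (fun φ ψ : gffConfigSubgroup c x => gffEnergy_add_add_gffEnergy_sub c φ ψ)
      (W.comp (gffConfigSubgroup c x).subtype)
  rw [gffRVar, hmean, zero_div, zero_pow two_ne_zero, sub_zero]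
  simp only [mul_comm (W _ ^ 2)]
  rfl

theorem exists_sum_sq_le_mul_gffEnergy (hnn : ∀ i j, 0 ≤ c i j) (x : V) :
    ∃ C : ℝ, 0 < C ∧ ∀ φ ∈ gffConfigSubgroup c x, ∑ v, (φ v : ℝ) ^ 2 ≤ C * gffEnergy c φ := by
  have hvertex (v : V) : ∃ C : ℝ, 0 ≤ C ∧
      ∀ φ ∈ gffConfigSubgroup c x, (φ v : ℝ) ^ 2 ≤ C * gffEnergy c φ := by
    by_cases hv : (supportGraph c).Reachable x v
    · obtain ⟨C, hC, hCφ⟩ := exists_sq_apply_le_mul_gffEnergy hnn hv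
      exact ⟨C, hC, fun φ hφ => hCφ φ hφ.1⟩
    · exact ⟨0, le_rfl, fun φ hφ => by simp [hφ.2 v hv]⟩
  choose C hC hCφ using hvertex
  refine ⟨∑ v, C v + 1, add_pos_of_nonneg_of_pos (Finset.sum_nonneg fun v _ => hC v) one_pos,
    fun φ hφ => ?_⟩
  calc ∑ v, (φ v : ℝ) ^ 2 ≤ ∑ v, C v * gffEnergy c φ := Finset.sum_le_sum fun v _ => hCφ v φ hφ
    _ ≤ (∑ v, C v + 1) * gffEnergy c φ := by
        rw [← Finset.sum_mul]
        exact mul_le_mul_of_nonneg_right (le_add_of_nonneg_right zero_le_one)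
          (gffEnergy_nonneg hnn φ)

theorem summable_exp_neg_gffEnergy_div (hnn : ∀ i j, 0 ≤ c i j) (x : V) {r : ℝ} (hr : 0 < r) :
    Summable fun φ : gffConfigSubgroup c x => Real.exp (-(gffEnergy c φ / r)) := by
  obtain ⟨C, hC, hCφ⟩ := exists_sum_sq_le_mul_gffEnergy hnn x
  refine ((summable_exp_neg_mul_sum_int_sq (ι := V) (inv_pos.mpr (mul_pos hr hC))).comp_injective
    Subtype.val_injective).of_nonneg_of_le (fun φ => (Real.exp_pos _).le) fun φ => ?_
  rw [Function.comp_apply, Real.exp_le_exp, neg_le_neg_iff, inv_mul_le_iff₀ (mul_pos hr hC)]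
  calc ∑ v, (φ.1 v : ℝ) ^ 2 ≤ C * gffEnergy c φ := hCφ φ φ.2
    _ = r * C * (gffEnergy c φ / r) := by field_simp

theorem summable_mul_exp_neg_gffEnergy_half (hnn : ∀ i j, 0 ≤ c i j) (x : V)
    (W : (V → ℤ) →+ ℝ) :
    Summable fun φ : gffConfigSubgroup c x => W φ * Real.exp (-(gffEnergy c φ / 2)) := by
  obtain ⟨C, hC, hCφ⟩ := exists_sum_sq_le_mul_gffEnergy hnn x
  obtain ⟨D, hD, hDφ⟩ := exists_sq_map_le_mul_sum_sq W
  refine summable_mul_exp_neg_half (D := D * C) (fun φ => gffEnergy_nonneg hnn φ)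
    (mul_nonneg hD hC.le) (fun φ => ?_) (summable_exp_neg_gffEnergy_div hnn x four_pos)
  rw [mul_assoc]
  exact (hDφ φ).trans (mul_le_mul_of_nonneg_left (hCφ φ φ.2) hD)

end Configurations

section OptionConfigurations

variable {V : Type*} {x : V} {c : V → V → ℝ} {c' : Option V → Option V → ℝ}

/-- A configuration on `Option V` is a configuration on `V` together with the height of the new
vertex `none`, when that vertex is connected to the root. -/
def gffConfigProdEquiv
    (hsome : ∀ v, (supportGraph c').Reachable (some x) (some v) ↔ (supportGraph c).Reachable x v)
    (hnone : (supportGraph c').Reachable (some x) none) :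
    gffConfigSubgroup c x × ℤ ≃ gffConfigSubgroup c' (some x) where
  toFun p := ⟨fun o => o.elim p.2 p.1.1, p.1.2.1, by
    rintro (_ | v) hv
    · exact absurd hnone hv
    · exact p.1.2.2 v (mt (hsome v).mpr hv)⟩
  invFun φ := (⟨fun v => φ.1 (some v), φ.2.1, fun v hv => φ.2.2 _ (mt (hsome v).mp hv)⟩, φ.1 none)
  left_inv _ := rfl
  right_inv φ := Subtype.ext <| funext <| Option.rec rfl fun _ => rfl

/-- A configuration on `Option V` is a configuration on `V` extended by `0` to the new vertex
`none`, when that vertex is not connected to the root. -/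
def gffConfigEquiv
    (hsome : ∀ v, (supportGraph c').Reachable (some x) (some v) ↔ (supportGraph c).Reachable x v)
    (hnone : ¬ (supportGraph c').Reachable (some x) none) :
    gffConfigSubgroup c x ≃ gffConfigSubgroup c' (some x) where
  toFun φ := ⟨fun o => o.elim 0 φ.1, φ.2.1, by
    rintro (_ | v) hv
    · rfl
    · exact φ.2.2 v (mt (hsome v).mpr hv)⟩
  invFun φ := ⟨fun v => φ.1 (some v), φ.2.1, fun v hv => φ.2.2 _ (mt (hsome v).mp hv)⟩
  left_inv _ := rfl
  right_inv φ := Subtype.ext <| funext <| Option.rec (φ.2.2 none hnone).symm fun _ => rfl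

end OptionConfigurations

section AddVertex

variable {V : Type*} [DecidableEq V] {c : V → V → ℝ} {x y z : V} {θ : ℝ}

theorem supportGraph_addVertexCond_adj_some_none (hedge : 0 < c y z) (hθ : 1 < θ) :
    (supportGraph (addVertexCond c y z θ)).Adj (some y) none := by
  refine (SimpleGraph.fromRel_adj _ _ _).mpr ⟨Option.some_ne_none y, Or.inl ?_⟩
  rw [addVertexCond, if_pos rfl]
  exact mul_pos (one_pos.trans hθ) hedge

theorem supportGraph_addVertexCond_adj_none_some (hyz : y ≠ z) (hedge : 0 < c y z) (hθ : 1 < θ) :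
    (supportGraph (addVertexCond c y z θ)).Adj none (some z) := by
  refine (SimpleGraph.fromRel_adj _ _ _).mpr ⟨(Option.some_ne_none z).symm, Or.inl ?_⟩
  rw [addVertexCond, if_neg hyz.symm, if_pos rfl]
  exact mul_pos (div_pos (one_pos.trans hθ) (sub_pos.mpr hθ)) hedge

theorem reachable_addVertexCond_of_adj (hyz : y ≠ z) (hedge : 0 < c y z) (hθ : 1 < θ) {a b : V}
    (hab : (supportGraph c).Adj a b) :
    (supportGraph (addVertexCond c y z θ)).Reachable (some a) (some b) := by
  have hdetour : (supportGraph (addVertexCond c y z θ)).Reachable (some y) (some z) :=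
    (supportGraph_addVertexCond_adj_some_none hedge hθ).reachable.trans
      (supportGraph_addVertexCond_adj_none_some hyz hedge hθ).reachable
  by_cases hforward : a = y ∧ b = z
  · rw [hforward.1, hforward.2]
    exact hdetour
  by_cases hbackward : a = z ∧ b = y
  · rw [hbackward.1, hbackward.2]
    exact hdetour.symm
  refine SimpleGraph.Adj.reachable ((SimpleGraph.fromRel_adj _ _ _).mpr ?_)
  obtain ⟨hne, hpos⟩ := (SimpleGraph.fromRel_adj _ _ _).mp hab
  rw [addVertexCond, addVertexCond, if_neg (by tauto), if_neg (by tauto)]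
  exact ⟨(Option.some_injective V).ne hne, hpos⟩

theorem reachable_getD_of_addVertexCond_pos (hedge : 0 < c y z) {o o' : Option V}
    (h : 0 < addVertexCond c y z θ o o') :
    (supportGraph c).Reachable (o.getD y) (o'.getD y) := by
  have hpos {a b : V} (hab : 0 < c a b) : (supportGraph c).Reachable a b := by
    rcases eq_or_ne a b with rfl | hne
    · rfl
    · exact SimpleGraph.Adj.reachable ((SimpleGraph.fromRel_adj _ _ _).mpr ⟨hne, Or.inl hab⟩)
  have hyz : (supportGraph c).Reachable y z := hpos hedge
  rcases o with _ | a <;> rcases o' with _ | b <;>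
    simp only [addVertexCond, Option.getD_none, Option.getD_some] at h ⊢
  · rfl
  · split_ifs at h with hb hb
    · rw [hb]
    · rwa [hb]
    · exact absurd h (lt_irrefl _)
  · split_ifs at h with ha ha
    · rw [ha]
    · rw [ha]
      exact hyz.symm
    · exact absurd h (lt_irrefl _)
  · split_ifs at h
    · exact absurd h (lt_irrefl _)
    · exact hpos h

theorem reachable_getD_of_reachable_addVertexCond (hedge : 0 < c y z) {o o' : Option V}
    (h : (supportGraph (addVertexCond c y z θ)).Reachable o o') :
    (supportGraph c).Reachable (o.getD y) (o'.getD y) := by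
  rw [SimpleGraph.reachable_iff_reflTransGen] at h
  induction h with
  | refl => rfl
  | tail _ hstep ih =>
    refine ih.trans ?_
    rcases ((SimpleGraph.fromRel_adj _ _ _).mp hstep).2 with h | h
    · exact reachable_getD_of_addVertexCond_pos hedge h
    · exact (reachable_getD_of_addVertexCond_pos hedge h).symm

theorem reachable_addVertexCond_some_iff (hyz : y ≠ z) (hedge : 0 < c y z) (hθ : 1 < θ) (v : V) :
    (supportGraph (addVertexCond c y z θ)).Reachable (some x) (some v) ↔
      (supportGraph c).Reachable x v := by
  refine ⟨reachable_getD_of_reachable_addVertexCond hedge, fun h => ?_⟩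
  rw [SimpleGraph.reachable_iff_reflTransGen] at h
  induction h with
  | refl => rfl
  | tail _ hstep ih => exact ih.trans (reachable_addVertexCond_of_adj hyz hedge hθ hstep)

variable [Fintype V]

theorem sum_addVertexCond_some_some (hyz : y ≠ z) (f : V → V → ℝ) :
    ∑ a, ∑ b, addVertexCond c y z θ (some a) (some b) * f a b =
      ∑ a, ∑ b, c a b * f a b - c y z * f y z - c z y * f z y := by
  have hcond (a b : V) : addVertexCond c y z θ (some a) (some b) * f a b =
      c a b * f a b - (if a = y then if b = z then c y z * f y z else 0 else 0)
        - (if a = z then if b = y then c z y * f z y else 0 else 0) := by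
    rw [addVertexCond]
    grind
  simp [hcond, Finset.sum_sub_distrib]

theorem sum_addVertexCond_none_some (hyz : y ≠ z) (f : V → ℝ) :
    ∑ b, addVertexCond c y z θ none (some b) * f b =
      θ * c y z * f y + θ / (θ - 1) * c y z * f z := by
  have hcond (b : V) : addVertexCond c y z θ none (some b) * f b =
      (if b = y then θ * c y z * f y else 0) + if b = z then θ / (θ - 1) * c y z * f z else 0 := by
    rw [addVertexCond]
    grind
  simp [hcond, Finset.sum_add_distrib]

/-- The height at which a new vertex on the edge `yz`, with conductances as in `addVertexCond`, has
minimal energy given the heights at `y` and `z`. -/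
noncomputable def edgeInterpolation (y z : V) (θ : ℝ) : (V → ℤ) →+ ℝ where
  toFun φ := φ y + (φ z - φ y) / θ
  map_zero' := by simp
  map_add' φ ψ := by
    simp only [Pi.add_apply]
    push_cast
    ring

theorem gffEnergy_addVertexCond (hyz : y ≠ z) (hzy : c z y = c y z) (hθ₀ : θ ≠ 0) (hθ₁ : θ ≠ 1)
    (φ : Option V → ℤ) :
    gffEnergy (addVertexCond c y z θ) φ = gffEnergy c (fun v => φ (some v)) +
      c y z * θ ^ 2 / (θ - 1) * (φ none - edgeInterpolation y z θ fun v => φ (some v)) ^ 2 := by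
  have hθ' : θ - 1 ≠ 0 := sub_ne_zero.mpr hθ₁
  have hsymm (a : V) : addVertexCond c y z θ (some a) none * ((φ (some a) - φ none : ℤ) : ℝ) ^ 2 =
      addVertexCond c y z θ none (some a) * ((φ none - φ (some a) : ℤ) : ℝ) ^ 2 := by
    rw [addVertexCond, addVertexCond]
    push_cast
    rw [sub_sq_comm]
  have hsquare (t p q : ℝ) : θ * (t - p) ^ 2 + θ / (θ - 1) * (t - q) ^ 2 - (p - q) ^ 2 =
      θ ^ 2 / (θ - 1) * (t - (p + (q - p) / θ)) ^ 2 := by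
    field_simp
    ring
  have hfactor := congrArg (c y z * ·) (hsquare (φ none) (φ (some y)) (φ (some z)))
  simp only [gffEnergy, Fintype.sum_option, Finset.sum_add_distrib, hsymm,
    sum_addVertexCond_none_some hyz, sub_self, Int.cast_zero, zero_pow two_ne_zero, mul_zero,
    sum_addVertexCond_some_some hyz fun a b => ((φ (some a) - φ (some b) : ℤ) : ℝ) ^ 2, hzy]
  simp only [edgeInterpolation, AddMonoidHom.coe_mk, ZeroHom.coe_mk]
  push_cast
  linear_combination hfactor

theorem gffRVar_addVertexCond (hyz : y ≠ z) (hzy : c z y = c y z) (hθ₀ : θ ≠ 0) (hθ₁ : θ ≠ 1)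
    (W : (V → ℤ) →+ ℝ) :
    gffRVar (addVertexCond c y z θ) (some x) (fun φ => W fun v => φ (some v)) =
      gaussianSecondMoment
        (fun φ : gffConfigSubgroup (addVertexCond c y z θ) (some x) =>
          gffEnergy c (fun v => φ.1 (some v)) + c y z * θ ^ 2 / (θ - 1) *
            (φ.1 none - edgeInterpolation y z θ fun v => φ.1 (some v)) ^ 2)
        (fun φ => W fun v => φ.1 (some v)) := by
  simp only [← gffEnergy_addVertexCond hyz hzy hθ₀ hθ₁]
  exact gffRVar_eq_gaussianSecondMoment (addVertexCond c y z θ) (some x)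
    (W.comp (LinearMap.funLeft ℤ ℤ some).toAddMonoidHom)

theorem gffRVar_addVertexCond_le_of_reachable (hnn : ∀ i j, 0 ≤ c i j) (hyz : y ≠ z)
    (hedge : 0 < c y z) (hzy : c z y = c y z) (hθ : 1 < θ) (hy : (supportGraph c).Reachable x y)
    (W : (V → ℤ) →+ ℝ) :
    gffRVar (addVertexCond c y z θ) (some x) (fun φ => W fun v => φ (some v)) ≤ gffRVar c x W := by
  have hsome := reachable_addVertexCond_some_iff (x := x) hyz hedge hθ
  have hnone : (supportGraph (addVertexCond c y z θ)).Reachable (some x) none :=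
    ((hsome y).mpr hy).trans (supportGraph_addVertexCond_adj_some_none hedge hθ).reachable
  rw [gffRVar_addVertexCond hyz hzy (one_pos.trans hθ).ne' hθ.ne', gffRVar_eq_gaussianSecondMoment,
    ← gaussianSecondMoment_comp_equiv (gffConfigProdEquiv hsome hnone)]
  exact gaussianSecondMoment_prod_int_le
    (fun φ ψ : gffConfigSubgroup c x => gffEnergy_add_add_gffEnergy_sub c φ ψ)
    (W.comp (gffConfigSubgroup c x).subtype)
    ((edgeInterpolation y z θ).comp (gffConfigSubgroup c x).subtype)
    (by simpa only [div_one] using summable_exp_neg_gffEnergy_div hnn x one_pos)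
    (summable_mul_exp_neg_gffEnergy_half hnn x W)
    (div_pos (mul_pos hedge (pow_pos (one_pos.trans hθ) 2)) (sub_pos.mpr hθ))

theorem gffRVar_addVertexCond_eq_of_not_reachable (hyz : y ≠ z) (hedge : 0 < c y z)
    (hzy : c z y = c y z) (hθ : 1 < θ) (hy : ¬ (supportGraph c).Reachable x y)
    (W : (V → ℤ) →+ ℝ) :
    gffRVar (addVertexCond c y z θ) (some x) (fun φ => W fun v => φ (some v)) = gffRVar c x W := by
  have hz : ¬ (supportGraph c).Reachable x z := fun hz =>
    hy (hz.trans ((SimpleGraph.fromRel_adj _ y z).mpr ⟨hyz, Or.inl hedge⟩).reachable.symm)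
  have hnone : ¬ (supportGraph (addVertexCond c y z θ)).Reachable (some x) none := fun h =>
    hy (reachable_getD_of_reachable_addVertexCond hedge h)
  have hinterp (φ : gffConfigSubgroup c x) : edgeInterpolation y z θ φ = 0 := by
    simp [edgeInterpolation, φ.2.2 y hy, φ.2.2 z hz]
  rw [gffRVar_addVertexCond hyz hzy (one_pos.trans hθ).ne' hθ.ne', gffRVar_eq_gaussianSecondMoment,
    ← gaussianSecondMoment_comp_equiv
      (gffConfigEquiv (reachable_addVertexCond_some_iff hyz hedge hθ) hnone)]
  refine congrArg (gaussianSecondMoment · fun φ : gffConfigSubgroup c x => W φ) (funext fun φ => ?_)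
  change gffEnergy c φ +
    c y z * θ ^ 2 / (θ - 1) * (((0 : ℤ) : ℝ) - edgeInterpolation y z θ φ) ^ 2 = gffEnergy c φ
  simp [hinterp]

end AddVertex

theorem gff_variance_monotone_vertex_addition_general
    {V : Type*} [Fintype V] [DecidableEq V] (x : V) (c : V → V → ℝ) (hnn : ∀ i j, 0 ≤ c i j)
    (y z : V) (hyz : y ≠ z) (hedge : 0 < c y z) (hzy : c z y = c y z) (θ : ℝ) (hθ : 1 < θ)
    (W : (V → ℤ) →+ ℝ) :
    gffRVar (addVertexCond c y z θ) (some x) (fun φ => W fun v => φ (some v)) ≤ gffRVar c x W := by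
  by_cases hy : (supportGraph c).Reachable x y
  · exact gffRVar_addVertexCond_le_of_reachable hnn hyz hedge hzy hθ hy W
  · exact (gffRVar_addVertexCond_eq_of_not_reachable hyz hedge hzy hθ hy W).le

/-- **Monotonicity under addition of a vertex.**
Let `G = (V,E,x)` be a finite connected rooted graph with conductances `c ∈ (0,∞)^E`
(encoded as a symmetric nonnegative function whose support graph is connected), let
`θ ∈ (1,∞)` and let `yz ∈ E` be an edge. Adding a new vertex `t` on the edge `yz`,
with conductances `λ̃_{yt} = θ λ_{yz}` and `λ̃_{tz} = (θ/(θ−1)) λ_{yz}`, decreases the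
variance of every height `φ(i)`, `i ∈ V`, and of every height difference
`φ(i) − φ(j)`, `i, j ∈ V`. -/
theorem gff_variance_monotone_vertex_addition
    {V : Type*} [Fintype V] [DecidableEq V] (x : V) (c : V → V → ℝ)
    (hsym : ∀ i j, c i j = c j i) (hnn : ∀ i j, 0 ≤ c i j)
    (hconn : (supportGraph c).Connected)
    (y z : V) (hyz : y ≠ z) (hedge : 0 < c y z)
    (θ : ℝ) (hθ : 1 < θ) :
    (∀ i : V,
        gffVar1 (addVertexCond c y z θ) (some x) (some i) ≤ gffVar1 c x i) ∧
      (∀ i j : V,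
        gffVar2 (addVertexCond c y z θ) (some x) (some i) (some j)
          ≤ gffVar2 c x i j) := by
  have hmono := gff_variance_monotone_vertex_addition_general x c hnn y z hyz hedge (hsym z y) θ hθ
  let height (i : V) : (V → ℤ) →+ ℝ := (Int.castAddHom ℝ).comp (Pi.evalAddMonoidHom _ i)
  have hreach (v : V) : (supportGraph c).Reachable x v := hconn.preconnected x v
  have hreach' (v : V) : (supportGraph (addVertexCond c y z θ)).Reachable (some x) (some v) :=
    (reachable_addVertexCond_some_iff hyz hedge hθ v).mpr (hreach v)
  refine ⟨fun i => ?_, fun i j => ?_⟩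
  · rw [gffVar1, gffVar1, if_pos (hreach' i), if_pos (hreach i)]
    exact ENNReal.ofReal_le_ofReal (hmono (height i))
  · rw [gffVar2, gffVar2, if_pos ⟨hreach' i, hreach' j⟩, if_pos ⟨hreach i, hreach j⟩]
    exact ENNReal.ofReal_le_ofReal (hmono (height i - height j))
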